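/- Let M = cQ + εD ∈ 𝔻ℍ[t] be a bounded monic reduced motion polynomial of degree n with monic c ∈ ℝ[t], Q, D ∈ ℍ[t], mrpf(Q) = 1, and ν(M) = c²·ν(Q) = Nⁿ for some irreducible quadratic N ∈ ℝ[t]. If M admits a factorization into monic linear motion polynomial factors, then there exist Q_L, Q_R, D_L, D_R, D' ∈ ℍ[t] such that M = (Q_L + εD_L)·(c + εD')·(Q_R + εD_R), where each of the three factors Q_L + εD_L, c + εD', and Q_R + εD_R is a (possibly empty) product of monic linear motion polynomials. -/

import Mathlib

open Polynomial DualNumber TrivSqZeroExt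

noncomputable section

/-- The real quaternions. -/
abbrev Hq : Type := Quaternion ℝ

/-- The dual quaternions. -/
abbrev DHq : Type := DualNumber Hq

/-- Conjugation of a dual quaternion: `(p + ε d)* = p* + ε d*`. -/
instance : Star DHq := ⟨fun x => inl (star x.fst) + inr (star x.snd)⟩

/-- Coefficient-wise (quaternion) conjugation of a polynomial. -/
def cstar {R : Type*} [Semiring R] [Star R] (A : R[X]) : R[X] :=
  A.sum fun n a => Polynomial.C (star a) * Polynomial.X ^ n

/-- The embedding `ℝ[t] → ℍ[t]`. -/
def qPoly (f : ℝ[X]) : Hq[X] := f.map (algebraMap ℝ Hq)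

/-- The embedding `ℍ[t] → 𝔻ℍ[t]` (primal part). -/
def dhQ (P : Hq[X]) : DHq[X] := P.map (inlHom Hq Hq)

/-- The embedding `ℝ[t] → 𝔻ℍ[t]`. -/
def dPoly (f : ℝ[X]) : DHq[X] := dhQ (qPoly f)

/-- The dual quaternion polynomial `P + ε D` with primal part `P` and dual part `D`. -/
def mp (P D : Hq[X]) : DHq[X] := dhQ P + Polynomial.C ε * dhQ D

/-- The primal part of a dual quaternion polynomial. -/
def primal (A : DHq[X]) : Hq[X] := A.map (fstHom ℝ Hq Hq).toRingHom

/-- A motion polynomial: a dual quaternion polynomial whose norm polynomial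
`ν(M) = M·M*` is a nonzero real polynomial. -/
def IsMotion (M : DHq[X]) : Prop := ∃ f : ℝ[X], f ≠ 0 ∧ M * cstar M = dPoly f

/-- A real polynomial divides a quaternion polynomial. -/
def RDvdQ (f : ℝ[X]) (A : Hq[X]) : Prop := ∃ B : Hq[X], A = qPoly f * B

/-- A real polynomial divides a dual quaternion polynomial. -/
def RDvdD (f : ℝ[X]) (A : DHq[X]) : Prop := ∃ B : DHq[X], A = dPoly f * B

/-- `g` is the greatest common monic real polynomial divisor of a quaternion polynomial `A`
(with itself), i.e. `g = mrpf A`. -/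
def IsMrpfQ (g : ℝ[X]) (A : Hq[X]) : Prop :=
  g.Monic ∧ RDvdQ g A ∧ ∀ f : ℝ[X], f.Monic → RDvdQ f A → f ∣ g

/-- `g` is the greatest common monic real polynomial divisor of `c ∈ ℝ[t]` and a quaternion
polynomial `A`, i.e. `g = mrpf(c, A)`. -/
def IsMrpf2 (g : ℝ[X]) (c : ℝ[X]) (A : Hq[X]) : Prop :=
  g.Monic ∧ g ∣ c ∧ RDvdQ g A ∧
    ∀ f : ℝ[X], f.Monic → f ∣ c → RDvdQ f A → f ∣ g

/-- `g` is the greatest common monic real polynomial divisor of `c ∈ ℝ[t]` and two quaternion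
polynomials `A` and `B`, i.e. `g = mrpf(c, A, B)`. -/
def IsMrpf3 (g : ℝ[X]) (c : ℝ[X]) (A B : Hq[X]) : Prop :=
  g.Monic ∧ g ∣ c ∧ RDvdQ g A ∧ RDvdQ g B ∧
    ∀ f : ℝ[X], f.Monic → f ∣ c → RDvdQ f A → RDvdQ f B → f ∣ g

/-- A quaternion polynomial is reduced: `mrpf = 1`, i.e. it has only constant real
polynomial factors. -/
def ReducedQ (A : Hq[X]) : Prop := ∀ f : ℝ[X], f.Monic → RDvdQ f A → f = 1

/-- A dual quaternion polynomial is reduced: `mrpf = 1`. -/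
def ReducedD (A : DHq[X]) : Prop := ∀ f : ℝ[X], f.Monic → RDvdD f A → f = 1

/-- Boundedness of a (monic reduced) motion polynomial: `mrpf` of its primal part has
no real root, equivalently no linear real polynomial `t - a` divides the primal part. -/
def BoundedD (M : DHq[X]) : Prop :=
  ∀ a : ℝ, ¬ RDvdQ (Polynomial.X - Polynomial.C a) (primal M)

/-- A generic motion polynomial: monic, a motion polynomial, with `mrpf` of the primal
part equal to `1`. -/
def GenericD (M : DHq[X]) : Prop :=
  M.Monic ∧ IsMotion M ∧ ReducedQ (primal M)

/-- The monic linear dual quaternion polynomial `t - p - ε d`. -/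
def lin (p d : Hq) : DHq[X] := mp (Polynomial.X - Polynomial.C p) (-Polynomial.C d)

/-- `M` admits a factorization into monic linear motion polynomial factors. -/
def HasLinFact (M : DHq[X]) : Prop :=
  ∃ L : List DHq, (∀ h ∈ L, IsMotion (Polynomial.X - Polynomial.C h)) ∧
    M = (L.map fun h => Polynomial.X - Polynomial.C h).prod

end

/-!
In a product of linear factors of norm `N`, a consecutive segment whose primal part is divisible
by `N` is of the form `N A + ε D`, and the product of two such segments is a multiple of `N`
because `ε² = 0`. So if `M` is reduced, no two disjoint segments cancel, and the cancellations
`(t - p)(t - p*) = N` among the primal parts are nested in one another. The outermost cancelling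
segment has primal part a power of `N`, the primal parts to its left and right have a product not
divisible by `N`, and comparing with `c Q` shows that this power is `c`.
-/

section Monoid

theorem eq_of_pow_mul_eq_pow_mul {R : Type*} [MonoidWithZero R] [IsLeftCancelMulZero R]
    {a x y : R} {m n : ℕ} (ha : a ≠ 0) (hx : ¬ a ∣ x) (hy : ¬ a ∣ y)
    (h : a ^ m * x = a ^ n * y) : m = n := by
  have : NoZeroDivisors R := IsLeftCancelMulZero.to_noZeroDivisors R
  wlog hmn : m < n generalizing m n x y
  · by_contra hne
    exact hne (this hy hx h.symm (lt_of_le_of_ne (not_lt.mp hmn) (Ne.symm hne))).symm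
  refine absurd ?_ hx
  rw [← mul_dvd_mul_iff_left (pow_ne_zero m ha), h, ← pow_succ]
  exact (pow_dvd_pow a hmn).mul_right y

theorem exists_append_prod_eq_pow {R : Type*} [Monoid R] {K : R} (hK : ∀ x, Commute K x)
    (l : List R) (hatom : ∀ x ∈ l, ¬ K ∣ x)
    (hcancel : ∀ x ∈ l, ∀ y ∈ l, ∀ z, K ∣ x * (y * z) → K ∣ y * z ∨ x * y = K)
    (hsplit : ∀ u v, l = u ++ v → ¬ (K ∣ u.prod ∧ K ∣ v.prod)) :
    ∃ l₁ l₂ l₃ : List R, ∃ k : ℕ,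
      l = l₁ ++ l₂ ++ l₃ ∧ l₂.prod = K ^ k ∧ ¬ K ∣ l₁.prod * l₃.prod := by
  have dvd_left {x : R} (y : R) (h : K ∣ x) : K ∣ y * x := by
    obtain ⟨z, rfl⟩ := h
    exact ⟨y * z, ((hK y).left_comm z).symm⟩
  induction l with
  | nil => exact ⟨[], [], [], 0, by simp, by simp, by simpa using hsplit [] []⟩
  | cons a l ih =>
    obtain ⟨l₁, l₂, l₃, k, rfl, hk, hndvd⟩ := ih
      (fun x hx => hatom x (.tail _ hx))
      (fun x hx y hy => hcancel x (.tail _ hx) y (.tail _ hy))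
      (fun u v huv h => hsplit (a :: u) v (by rw [huv, List.cons_append])
        ⟨by simpa only [List.prod_cons] using dvd_left a h.1, h.2⟩)
    by_cases hdvd : K ∣ a * (l₁.prod * l₃.prod)
    swap
    · exact ⟨a :: l₁, l₂, l₃, k, rfl, hk, by rwa [List.prod_cons, mul_assoc]⟩
    rcases l₁ with _ | ⟨b, l₁⟩
    · rcases l₃ with _ | ⟨b, l₃⟩
      · exact absurd (by simpa using hdvd) (hatom a (by simp))
      · simp only [List.prod_nil, List.prod_cons, one_mul] at hdvd hndvd
        have hab : a * b = K := (hcancel a (by simp) b (by simp) _ hdvd).resolve_left hndvd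
        refine ⟨[], a :: (l₂ ++ [b]), l₃, k + 1, by simp, ?_, ?_⟩
        · rw [List.prod_cons, List.prod_append, List.prod_singleton, hk,
            ((hK b).pow_left k).eq, ← mul_assoc, hab, pow_succ']
        · simpa using fun h => hndvd (dvd_left b h)
    · simp only [List.prod_cons, mul_assoc] at hdvd hndvd
      have hab : a * b = K := (hcancel a (by simp) b (by simp) _ hdvd).resolve_left hndvd
      refine ⟨[], [a, b], l₁ ++ l₂ ++ l₃, 1, by simp, by simp [hab], fun h => ?_⟩
      exact hsplit [a, b] (l₁ ++ l₂ ++ l₃) (by simp) ⟨by simp [hab], by simpa using h⟩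

end Monoid

section Polynomial

theorem commute_map_algebraMap {R A : Type*} [CommSemiring R] [Semiring A] [Algebra R A]
    (f : R[X]) (P : A[X]) : Commute (f.map (algebraMap R A)) P := by
  ext n
  rw [coeff_mul, coeff_mul, ← Finset.Nat.sum_antidiagonal_swap]
  simp only [coeff_map, Prod.fst_swap, Prod.snd_swap, Algebra.commutes]

theorem exists_eq_X_sub_C_mul_add_C {R : Type*} [Ring R] (B : R[X]) (a : R) :
    ∃ S r, B = (X - C a) * S + C r := by
  nontriviality R
  have hdeg : (B %ₘ (X - C a)).degree ≤ 0 := Nat.WithBot.lt_one_iff_le_zero.mp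
    ((degree_modByMonic_lt B (monic_X_sub_C a)).trans_eq (degree_X_sub_C a))
  refine ⟨B /ₘ (X - C a), (B %ₘ (X - C a)).coeff 0, ?_⟩
  rw [← eq_C_of_degree_le_zero hdeg, add_comm, modByMonic_add_div B]

theorem X_sub_C_dvd_of_dvd_mul {R : Type*} [Ring R] [NoZeroDivisors R] {p p' q : R} {B : R[X]}
    (hne : q ≠ p) (hq : X - C q ∣ (X - C p) * (X - C p')) (hB : X - C q ∣ (X - C p) * B) :
    X - C p' ∣ B := by
  nontriviality R
  obtain ⟨S, r, rfl⟩ := exists_eq_X_sub_C_mul_add_C B p'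
  have hdvd : X - C q ∣ C ((q - p) * r) := by
    have hrem : C ((q - p) * r) = (X - C p) * ((X - C p') * S + C r)
        - (X - C p) * (X - C p') * S - (X - C q) * C r := by
      simp only [C_mul, C_sub]
      noncomm_ring
    rw [hrem]
    exact (hB.sub (hq.mul_right _)).sub (dvd_mul_right _ _)
  have hzero : (q - p) * r = 0 := by
    by_contra h
    refine (monic_X_sub_C q).not_dvd_of_natDegree_lt (C_ne_zero.mpr h) ?_ hdvd
    rw [natDegree_C, natDegree_X_sub_C]
    exact one_pos
  obtain rfl : r = 0 := (mul_eq_zero.mp hzero).resolve_left (sub_ne_zero.mpr hne)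
  exact ⟨S, by rw [C_0, add_zero]⟩

theorem eq_normalize_pow_of_dvd_pow {F : Type*} [Field F] [DecidableEq F] {N c : F[X]} {n : ℕ}
    (hN : Irreducible N) (hc : c.Monic) (h : c ∣ N ^ n) : ∃ i, c = normalize N ^ i := by
  obtain ⟨i, -, hi⟩ := (dvd_prime_pow hN.prime n).mp h
  exact ⟨i, eq_of_monic_of_associated hc ((monic_normalize hN.ne_zero).pow i)
    (hi.trans (associated_normalize N).pow_pow)⟩

end Polynomial

section Conjugation

variable {R : Type*}

theorem coeff_cstar [Semiring R] [StarAddMonoid R] (A : R[X]) (n : ℕ) :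
    (cstar A).coeff n = star (A.coeff n) := by
  rw [cstar, sum_def, finsetSum_coeff]
  simp only [coeff_C_mul, coeff_X_pow, mul_ite, mul_one, mul_zero, Finset.sum_ite_eq]
  split_ifs with h
  · rfl
  · rw [notMem_support_iff.mp h, star_zero]

theorem cstar_mul [Semiring R] [StarRing R] (A B : R[X]) :
    cstar (A * B) = cstar B * cstar A := by
  ext1 n
  rw [coeff_cstar, coeff_mul, coeff_mul, star_sum, ← Finset.Nat.sum_antidiagonal_swap]
  simp only [coeff_cstar, star_mul, Prod.fst_swap, Prod.snd_swap]

theorem cstar_X_sub_C [Ring R] [StarRing R] (a : R) : cstar (X - C a) = X - C (star a) := by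
  ext1 n
  simp only [coeff_cstar, coeff_sub, coeff_X, coeff_C, star_sub, apply_ite star, star_one,
    star_zero]

theorem cstar_qPoly (f : ℝ[X]) : cstar (qPoly f) = qPoly f := by
  ext1 n
  rw [coeff_cstar, qPoly, coeff_map]
  exact Quaternion.star_coe _

end Conjugation

section Quaternion

theorem commute_qPoly (f : ℝ[X]) (A : Hq[X]) : Commute (qPoly f) A :=
  commute_map_algebraMap f A

theorem qPoly_pow (f : ℝ[X]) (k : ℕ) : qPoly (f ^ k) = qPoly f ^ k :=
  Polynomial.map_pow _ k

theorem qPoly_mul_mul_cstar (c : ℝ[X]) (Q : Hq[X]) :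
    qPoly c * Q * cstar (qPoly c * Q) = qPoly (c ^ 2) * (Q * cstar Q) := by
  rw [cstar_mul, cstar_qPoly, ← (commute_qPoly c (cstar Q)).eq, mul_assoc,
    (commute_qPoly c Q).symm.left_comm, ← mul_assoc, ← sq, qPoly_pow]

theorem mul_mul_cstar_eq_qPoly {A B : Hq[X]} {f g : ℝ[X]} (hA : A * cstar A = qPoly f)
    (hB : B * cstar B = qPoly g) : A * B * cstar (A * B) = qPoly (f * g) := by
  calc A * B * cstar (A * B) = A * (B * cstar B) * cstar A := by
        rw [cstar_mul]; simp only [mul_assoc]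
    _ = A * cstar A * qPoly g := by rw [hB, mul_assoc, commute_qPoly g, mul_assoc]
    _ = qPoly (f * g) := by rw [hA, qPoly, qPoly, qPoly, Polynomial.map_mul]

/-- The reduced characteristic polynomial `t² - (p + p*) t + p p*` of a quaternion `p`, which is
the norm polynomial of `t - p`. -/
noncomputable def quatCharpoly (p : Hq) : ℝ[X] := X ^ 2 - C (2 * p.re) * X + C (Quaternion.normSq p)

theorem natDegree_quatCharpoly (p : Hq) : (quatCharpoly p).natDegree = 2 := by
  unfold quatCharpoly; compute_degree!

theorem monic_quatCharpoly (p : Hq) : (quatCharpoly p).Monic := by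
  unfold quatCharpoly; monicity!

theorem quatCharpoly_star (p : Hq) : quatCharpoly (star p) = quatCharpoly p := by
  simp [quatCharpoly]

theorem qPoly_quatCharpoly (p : Hq) :
    qPoly (quatCharpoly p) = (X - C p) * (X - C (star p)) := by
  have trace : algebraMap ℝ Hq (2 * p.re) = p + star p := (Quaternion.self_add_star' p).symm
  have norm : algebraMap ℝ Hq (Quaternion.normSq p) = p * star p :=
    (Quaternion.self_mul_star p).symm
  calc qPoly (quatCharpoly p) = X ^ 2 - C (p + star p) * X + C (p * star p) := by
        rw [← trace, ← norm]; simp [qPoly, quatCharpoly]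
    _ = (X - C p) * (X - C (star p)) := by
        simp only [C_add, C_mul, sub_mul, mul_sub, add_mul, X_mul_C, sq]
        abel

theorem not_qPoly_quatCharpoly_dvd_X_sub_C (p q : Hq) :
    ¬ qPoly (quatCharpoly p) ∣ X - C q := by
  refine ((monic_quatCharpoly p).map _).not_dvd_of_natDegree_lt (X_sub_C_ne_zero q) ?_
  rw [(monic_quatCharpoly p).natDegree_map, natDegree_quatCharpoly, natDegree_X_sub_C]
  exact one_lt_two

theorem qPoly_dvd_or_mul_eq {p q : Hq} (hpq : quatCharpoly p = quatCharpoly q) {B : Hq[X]}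
    (h : qPoly (quatCharpoly p) ∣ (X - C p) * ((X - C q) * B)) :
    qPoly (quatCharpoly p) ∣ (X - C q) * B ∨
      (X - C p) * (X - C q) = qPoly (quatCharpoly p) := by
  by_cases hq : star p = q
  · exact .inr (by rw [← hq, qPoly_quatCharpoly])
  left
  have hB : X - C (star p) ∣ (X - C q) * B := by
    rwa [qPoly_quatCharpoly, mul_dvd_mul_iff_left (X_sub_C_ne_zero p)] at h
  have hnorm : X - C (star p) ∣ (X - C q) * (X - C (star q)) := by
    rw [← qPoly_quatCharpoly, ← hpq, ← quatCharpoly_star, qPoly_quatCharpoly]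
    exact dvd_mul_right _ _
  rw [hpq, qPoly_quatCharpoly, mul_dvd_mul_iff_left (X_sub_C_ne_zero q)]
  exact X_sub_C_dvd_of_dvd_mul hq hnorm hB

theorem prod_X_sub_C_mul_cstar (l : List Hq) :
    (l.map fun p => X - C p).prod * cstar (l.map fun p => X - C p).prod =
      qPoly (l.map quatCharpoly).prod := by
  induction l with
  | nil => simpa [qPoly] using cstar_qPoly 1
  | cons p l ih =>
    simp only [List.map_cons, List.prod_cons]
    exact mul_mul_cstar_eq_qPoly (by rw [cstar_X_sub_C, qPoly_quatCharpoly]) ih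

theorem quatCharpoly_eq_normalize {N : ℝ[X]} (hN : Irreducible N) (hN2 : N.natDegree = 2) {n : ℕ}
    {p : Hq} (hp : quatCharpoly p ∣ N ^ n) : quatCharpoly p = normalize N := by
  obtain ⟨i, hi⟩ := eq_normalize_pow_of_dvd_pow hN (monic_quatCharpoly p) hp
  have hdeg : (normalize N).natDegree = 2 := by
    rw [natDegree_eq_of_degree_eq degree_normalize, hN2]
  have hi1 : i = 1 := by
    have := congrArg natDegree hi
    rw [natDegree_quatCharpoly, natDegree_pow, hdeg] at this
    lia
  rw [hi, hi1, pow_one]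

end Quaternion

section DualQuaternion

/-- The dual part `D` of `P + ε D`. -/
noncomputable def dual (A : DHq[X]) : Hq[X] := A.sum fun n a => monomial n a.snd

theorem coeff_dual (A : DHq[X]) (n : ℕ) : (dual A).coeff n = (A.coeff n).snd := by
  rw [dual, sum_def, finsetSum_coeff]
  simp only [coeff_monomial, Finset.sum_ite_eq']
  split_ifs with h
  · rfl
  · rw [notMem_support_iff.mp h, snd_zero]

theorem coeff_mp (P D : Hq[X]) (n : ℕ) :
    (mp P D).coeff n = inl (P.coeff n) + inr (D.coeff n) := by
  rw [mp, coeff_add, coeff_C_mul, dhQ, dhQ, coeff_map, coeff_map]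
  ext <;> simp

theorem mp_primal_dual (A : DHq[X]) : mp (primal A) (dual A) = A := by
  ext1 n
  rw [coeff_mp, coeff_dual, primal, coeff_map]
  exact inl_fst_add_inr_snd_eq _

theorem commute_C_eps (A : DHq[X]) : Commute (C ε) A := by
  ext1 n
  rw [coeff_C_mul, coeff_mul_C]
  exact DualNumber.commute_eps_left _

theorem primal_mul (A B : DHq[X]) : primal (A * B) = primal A * primal B :=
  Polynomial.map_mul _

theorem primal_mp (P D : Hq[X]) : primal (mp P D) = P := by
  ext1 n
  rw [primal, coeff_map, coeff_mp]
  simp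

theorem mp_mul (P D P' D' : Hq[X]) : mp P D * mp P' D' = mp (P * P') (P * D' + D * P') := by
  have eps_sq : (C ε * C ε : DHq[X]) = 0 := by rw [← C_mul, DualNumber.eps_mul_eps, C_0]
  calc mp P D * mp P' D'
      = dhQ P * dhQ P' + (dhQ P * C ε) * dhQ D' + C ε * (dhQ D * dhQ P')
        + C ε * (dhQ D * C ε) * dhQ D' := by simp only [mp]; noncomm_ring
    _ = dhQ P * dhQ P' + C ε * (dhQ P * dhQ D' + dhQ D * dhQ P')
        + C ε * C ε * dhQ D * dhQ D' := by
          rw [← (commute_C_eps (dhQ P)).eq, ← (commute_C_eps (dhQ D)).eq]; noncomm_ring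
    _ = mp (P * P') (P * D' + D * P') := by
          rw [eps_sq, zero_mul, zero_mul, add_zero]
          simp only [mp, dhQ, Polynomial.map_add, Polynomial.map_mul]

theorem dPoly_dvd_mul {f : ℝ[X]} {A B : DHq[X]} (hA : qPoly f ∣ primal A)
    (hB : qPoly f ∣ primal B) : dPoly f ∣ A * B := by
  obtain ⟨A', hA'⟩ := hA
  obtain ⟨B', hB'⟩ := hB
  have hf : dPoly f = mp (qPoly f) 0 := by simp [dPoly, mp, dhQ]
  refine ⟨mp (A' * primal B) (A' * dual B + dual A * B'), ?_⟩
  calc A * B = mp (primal A) (dual A) * mp (primal B) (dual B) := by simp only [mp_primal_dual]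
    _ = mp (qPoly f * (A' * primal B)) (qPoly f * (A' * dual B + dual A * B')) := by
      rw [mp_mul, hA', mul_assoc, mul_assoc, mul_add, (commute_qPoly f (dual A)).left_comm, ← hB']
    _ = dPoly f * mp (A' * primal B) (A' * dual B + dual A * B') := by
      rw [hf, mp_mul, zero_mul, add_zero]

/-- The product `∏ (t - h)` of monic linear dual quaternion polynomials. -/
noncomputable def linProd (L : List DHq) : DHq[X] := (L.map fun h => X - C h).prod

theorem linProd_append (L L' : List DHq) : linProd (L ++ L') = linProd L * linProd L' := by
  rw [linProd, List.map_append, List.prod_append, linProd, linProd]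

theorem primal_linProd (L : List DHq) :
    primal (linProd L) = (L.map fun h => X - C h.fst).prod := by
  rw [primal, linProd, Polynomial.map_list_prod, List.map_map]
  simp [Function.comp_def]

theorem hasLinFact_linProd {L : List DHq} (hL : ∀ h ∈ L, IsMotion (X - C h)) :
    HasLinFact (linProd L) :=
  ⟨L, hL, rfl⟩

theorem quatCharpoly_eq_normalize_of_mem {N : ℝ[X]} (hN : Irreducible N) (hN2 : N.natDegree = 2)
    {n : ℕ} {L : List DHq}
    (hL : primal (linProd L) * cstar (primal (linProd L)) = qPoly (N ^ n)) :
    ∀ h ∈ L, quatCharpoly h.fst = normalize N := by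
  have hprod : (L.map fun h => quatCharpoly h.fst).prod = N ^ n := by
    apply Polynomial.map_injective _ (algebraMap ℝ Hq).injective
    change qPoly _ = qPoly _
    rw [← hL, primal_linProd]
    simpa only [List.map_map, Function.comp_def] using
      (prod_X_sub_C_mul_cstar (L.map fun h => h.fst)).symm
  intro h hh
  refine quatCharpoly_eq_normalize hN hN2 (n := n) ?_
  rw [← hprod]
  exact List.dvd_prod (List.mem_map_of_mem hh)

theorem exists_append_primal_eq_pow {N : ℝ[X]} {L : List DHq}
    (hL : ∀ h ∈ L, quatCharpoly h.fst = N) (hred : ¬ dPoly N ∣ linProd L) :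
    ∃ L₁ L₂ L₃ : List DHq, ∃ k : ℕ, L = L₁ ++ L₂ ++ L₃ ∧
      primal (linProd L₂) = qPoly N ^ k ∧
      ¬ qPoly N ∣ primal (linProd L₁) * primal (linProd L₃) := by
  have hatom : ∀ x ∈ L.map fun h => X - C h.fst, ¬ qPoly N ∣ x := by
    simp only [List.forall_mem_map]
    intro h hh
    rw [← hL h hh]
    exact not_qPoly_quatCharpoly_dvd_X_sub_C _ _
  have hcancel : ∀ x ∈ L.map fun h => X - C h.fst, ∀ y ∈ L.map fun h => X - C h.fst, ∀ B,
      qPoly N ∣ x * (y * B) → qPoly N ∣ y * B ∨ x * y = qPoly N := by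
    simp only [List.forall_mem_map]
    intro g hg h hh B hB
    rw [← hL g hg] at hB ⊢
    exact qPoly_dvd_or_mul_eq ((hL g hg).trans (hL h hh).symm) hB
  have hsplit : ∀ u v, (L.map fun h => X - C h.fst) = u ++ v →
      ¬ (qPoly N ∣ u.prod ∧ qPoly N ∣ v.prod) := by
    rintro u v huv ⟨hu, hv⟩
    obtain ⟨L₁, L₂, rfl, rfl, rfl⟩ := List.map_eq_append_iff.mp huv
    rw [← primal_linProd] at hu hv
    exact hred (linProd_append L₁ L₂ ▸ dPoly_dvd_mul hu hv)
  obtain ⟨l₁, l₂, l₃, k, hl, hk, hndvd⟩ :=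
    exists_append_prod_eq_pow (commute_qPoly N) _ hatom hcancel hsplit
  obtain ⟨L₁₂, L₃, rfl, hL₁₂, rfl⟩ := List.map_eq_append_iff.mp hl
  obtain ⟨L₁, L₂, rfl, rfl, rfl⟩ := List.map_eq_append_iff.mp hL₁₂
  simp only [← primal_linProd] at hk hndvd
  exact ⟨L₁, L₂, L₃, k, rfl, hk, hndvd⟩

theorem exists_append_primal_eq_qPoly {N : ℝ[X]} (hN : N.Monic) {L : List DHq}
    (hL : ∀ h ∈ L, quatCharpoly h.fst = N) (hred : ¬ dPoly N ∣ linProd L) {Q : Hq[X]} {j : ℕ}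
    (hQ : ¬ qPoly N ∣ Q) (hP : primal (linProd L) = qPoly (N ^ j) * Q) :
    ∃ L₁ L₂ L₃ : List DHq, L = L₁ ++ L₂ ++ L₃ ∧ primal (linProd L₂) = qPoly (N ^ j) := by
  obtain ⟨L₁, L₂, L₃, k, rfl, hk, hndvd⟩ := exists_append_primal_eq_pow hL hred
  have hpow : qPoly N ^ k * (primal (linProd L₁) * primal (linProd L₃)) = qPoly N ^ j * Q := by
    rw [← qPoly_pow N j, ← hP, linProd_append, linProd_append, primal_mul, primal_mul, hk,
      ← mul_assoc, ((commute_qPoly N _).pow_left k).eq]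
  have hkj : k = j := eq_of_pow_mul_eq_pow_mul (hN.map _).ne_zero hndvd hQ hpow
  exact ⟨L₁, L₂, L₃, rfl, by rw [hk, hkj, qPoly_pow]⟩

end DualQuaternion

/-- For a motion polynomial of primary norm admitting a linear factorization, there is a
three-part factorization with a translational middle factor. -/
theorem primary_factorization_pattern
    (n : ℕ) (c : ℝ[X]) (Q D : Hq[X]) (N : ℝ[X]) (M : DHq[X])
    (hM : M = mp (qPoly c * Q) D)
    (hc : c.Monic) (hmonic : M.Monic) (hmotion : IsMotion M)
    (hred : ReducedD M) (hbdd : BoundedD M) (hQred : ReducedQ Q)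
    (hdeg : M.natDegree = n)
    (hN2 : N.natDegree = 2) (hNirr : Irreducible N)
    (hQnorm : qPoly (c ^ 2) * (Q * cstar Q) = qPoly (N ^ n))
    (hnorm : M * cstar M = dPoly (N ^ n))
    (hfact : HasLinFact M) :
    ∃ QL QR DL DR D' : Hq[X],
      M = mp QL DL * mp (qPoly c) D' * mp QR DR ∧
      HasLinFact (mp QL DL) ∧ HasLinFact (mp (qPoly c) D') ∧
      HasLinFact (mp QR DR) := by
  obtain ⟨L, hL, hLM : M = linProd L⟩ := hfact
  have hP : primal (linProd L) = qPoly c * Q := by rw [← hLM, hM, primal_mp]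
  have hcQ : qPoly c * Q * cstar (qPoly c * Q) = qPoly (N ^ n) :=
    (qPoly_mul_mul_cstar c Q).trans hQnorm
  have hN : (normalize N).Monic := monic_normalize hNirr.ne_zero
  have hN1 : normalize N ≠ 1 := fun h => hNirr.not_isUnit (normalize_eq_one.mp h)
  obtain ⟨j, rfl⟩ : ∃ j, c = normalize N ^ j := by
    refine eq_normalize_pow_of_dvd_pow (n := n) hNirr hc ?_
    rw [← map_dvd_map _ (algebraMap ℝ Hq).injective hc]
    exact ⟨_, by rw [← mul_assoc]; exact hcQ.symm⟩
  obtain ⟨L₁, L₂, L₃, rfl, hL₂⟩ := exists_append_primal_eq_qPoly hN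
    (quatCharpoly_eq_normalize_of_mem hNirr hN2 (hP ▸ hcQ))
    (fun h => hN1 (hred _ hN (hLM ▸ h))) (fun h => hN1 (hQred _ hN h)) hP
  refine ⟨primal (linProd L₁), primal (linProd L₃), dual (linProd L₁), dual (linProd L₃),
    dual (linProd L₂), ?_⟩
  rw [← hL₂, mp_primal_dual, mp_primal_dual, mp_primal_dual, ← linProd_append, ← linProd_append]
  simp only [List.mem_append] at hL
  exact ⟨hLM, hasLinFact_linProd fun h hh => hL h (.inl (.inl hh)),
    hasLinFact_linProd fun h hh => hL h (.inl (.inr hh)),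
    hasLinFact_linProd fun h hh => hL h (.inr hh)⟩
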